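/- Let π = r_0 ⋯ r_n be a closed finite trace over U and let M = (S,P,μ) be a finite-state Markov chain over U such that L(M,π) ≥ L(M',π) for every finite-state Markov chain M' over U. Then for every pair of states (r,r') with P(r,r') > 0 and r reachable from r_0 in M, the pair (r,r') occurs as a consecutive pair in π, i.e., T_π(r,r') > 0. -/

import Mathlib

/-!
A chain of maximal likelihood gives `π` positive likelihood, because the chain that jumps uniformly
among the states of `π` already does (`exists_lik_pos`); hence every factor of the likelihood of
`M` is positive. If a state `a = r i` with `i < n` had a transition `(a, b)` of positive
probability that `π` never uses, then moving its mass onto the used transition `(a, r (i + 1))`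
would shrink no factor of the likelihood and strictly enlarge the `i`-th one, contradicting
maximality (`traceT_pos_of_visited`). It remains to see that every state reachable from `r 0` is
some `r i` with `i < n`: along a path, each transition occurs in `π` and so leads to another state
of `π`, and closedness identifies the last state `r n` with an earlier one.
-/

open Finset

/-- A finite-state Markov chain over the state universe `U`: a finite nonempty
set `S` of states, a transition probability matrix `P` supported in `S × S`
whose rows (indexed by states of `S`) sum to `1`, and an initial probability
distribution `μ` supported in `S`. -/
structure FinMC (U : Type*) where
  S : Finset U
  S_ne : S.Nonempty
  P : U → U → ℝ
  P_nonneg : ∀ a b, 0 ≤ P a b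
  P_le_one : ∀ a b, P a b ≤ 1
  P_zero : ∀ a b, a ∉ S ∨ b ∉ S → P a b = 0
  P_row : ∀ a ∈ S, ∑ b ∈ S, P a b = 1
  μ : U → ℝ
  μ_nonneg : ∀ a, 0 ≤ μ a
  μ_zero : ∀ a, a ∉ S → μ a = 0
  μ_sum : ∑ a ∈ S, μ a = 1

/-- The likelihood `L(M, π) = μ(r 0) · ∏_{i=1}^{n} P(r (i-1), r i)` that the
chain `M` generates the finite trace `π = r 0 ⋯ r n`. -/
def FinMC.lik {U : Type*} (M : FinMC U) (r : ℕ → U) (n : ℕ) : ℝ :=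
  M.μ (r 0) * ∏ i ∈ range n, M.P (r i) (r (i + 1))

/-- `traceT r n a b` is the number of indices `0 ≤ i ≤ n - 1` with
`r i = a` and `r (i+1) = b`, i.e. the number of occurrences of the
transition `(a, b)` in the trace `r 0 ⋯ r n`. -/
def traceT {U : Type*} [DecidableEq U] (r : ℕ → U) (n : ℕ) (a b : U) : ℕ :=
  ((range n).filter (fun i => r i = a ∧ r (i + 1) = b)).card

/-- The set of states `{r 0, …, r n}` occurring in the trace `r 0 ⋯ r n`. -/
def traceStates {U : Type*} [DecidableEq U] (r : ℕ → U) (n : ℕ) : Finset U :=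
  (range (n + 1)).image r

/-- The empirical transition matrix of the trace `r 0 ⋯ r n`:
`P_π(a, b) = T_π(a, b) / ∑_{c} T_π(a, c)`. -/
noncomputable def traceP {U : Type*} [DecidableEq U] (r : ℕ → U) (n : ℕ) (a b : U) : ℝ :=
  (traceT r n a b : ℝ) / ∑ c ∈ traceStates r n, (traceT r n a c : ℝ)

/-- The likelihood `L(M_π, π)` that the induced chain `M_π` generates `π`
(the initial distribution of `M_π` gives probability 1 to `r 0`). -/
noncomputable def traceLik {U : Type*} [DecidableEq U] (r : ℕ → U) (n : ℕ) : ℝ :=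
  ∏ i ∈ range n, traceP r n (r i) (r (i + 1))

/-- `M.reach a b`: state `b` is reachable from `a` in `M` via transitions of
positive probability. -/
def FinMC.reach {U : Type*} (M : FinMC U) : U → U → Prop :=
  Relation.ReflTransGen (fun a b => 0 < M.P a b)

/-- The transition matrix `P` with the mass of `(a, b)` moved onto `(a, c)`. -/
def moveMass {U : Type*} [DecidableEq U] (P : U → U → ℝ) (a b c : U) (x y : U) : ℝ :=
  if x = a then P x y + (if y = c then P a b else 0) - (if y = b then P a b else 0) else P x y

/-- The chain `M` with the mass of the transition `(a, b)` moved onto `(a, c)`, where `b ≠ c`. -/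
def FinMC.move {U : Type*} [DecidableEq U] (M : FinMC U) {a b c : U} (hb : b ∈ M.S)
    (hc : c ∈ M.S) (hbc : b ≠ c) : FinMC U :=
  have nonneg : ∀ x y, 0 ≤ moveMass M.P a b c x y := by
    intro x y
    have h1 := M.P_nonneg x y
    have h2 := M.P_nonneg a b
    unfold moveMass
    split_ifs <;> subst_vars <;> linarith
  have zero : ∀ x y, x ∉ M.S ∨ y ∉ M.S → moveMass M.P a b c x y = 0 := by
    intro x y h
    have h1 := M.P_zero x y h
    have h2 : x ∉ M.S → M.P x b = 0 := fun hx => M.P_zero x b (Or.inl hx)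
    unfold moveMass
    split_ifs <;> subst_vars <;> simp_all
  have row : ∀ x ∈ M.S, ∑ y ∈ M.S, moveMass M.P a b c x y = 1 := by
    intro x hx
    have h1 := M.P_row x hx
    unfold moveMass
    split_ifs with h
    · simp [Finset.sum_add_distrib, Finset.sum_sub_distrib, hb, hc, h1]
    · exact h1
  { S := M.S
    S_ne := M.S_ne
    P := moveMass M.P a b c
    P_nonneg := nonneg
    P_le_one := by
      intro x y
      by_cases h : x ∈ M.S ∧ y ∈ M.S
      · rw [← row x h.1]
        exact Finset.single_le_sum (fun z _ => nonneg x z) h.2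
      · rw [zero x y (by tauto)]
        exact zero_le_one
    P_zero := zero
    P_row := row
    μ := M.μ
    μ_nonneg := M.μ_nonneg
    μ_zero := M.μ_zero
    μ_sum := M.μ_sum }

/-- The witness is the chain on the states of the trace whose initial distribution and rows are all
uniform. -/
theorem exists_lik_pos {U : Type*} [DecidableEq U] (r : ℕ → U) (n : ℕ) :
    ∃ M : FinMC U, 0 < M.lik r n := by
  have hmem : ∀ i ≤ n, r i ∈ traceStates r n := fun i hi =>
    Finset.mem_image_of_mem r (by simpa using Nat.lt_succ_of_le hi)
  have hne : (traceStates r n).Nonempty := ⟨r 0, hmem 0 (Nat.zero_le n)⟩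
  have hcard : 0 < ((traceStates r n).card : ℝ) := by exact_mod_cast hne.card_pos
  have hle : ((traceStates r n).card : ℝ)⁻¹ ≤ 1 :=
    inv_le_one_of_one_le₀ (by exact_mod_cast hne.card_pos)
  refine ⟨{
    S := traceStates r n
    S_ne := hne
    P := fun a b => if a ∈ traceStates r n ∧ b ∈ traceStates r n
      then ((traceStates r n).card : ℝ)⁻¹ else 0
    P_nonneg := fun a b => by split_ifs <;> positivity
    P_le_one := fun a b => by split_ifs <;> linarith
    P_zero := fun a b h => if_neg (by tauto)
    P_row := fun a ha => by
      rw [Finset.sum_congr rfl (fun b hb => if_pos ⟨ha, hb⟩)]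
      simp [hcard.ne']
    μ := fun a => if a ∈ traceStates r n then ((traceStates r n).card : ℝ)⁻¹ else 0
    μ_nonneg := fun a => by split_ifs <;> positivity
    μ_zero := fun a h => if_neg h
    μ_sum := by
      rw [Finset.sum_congr rfl (fun b hb => if_pos hb)]
      simp [hcard.ne'] }, ?_⟩
  refine mul_pos ?_ (Finset.prod_pos fun i hi => ?_)
  · simp only [hmem 0 (Nat.zero_le n), if_true]
    positivity
  · have hi' := Finset.mem_range.mp hi
    simp only [hmem i hi'.le, hmem (i + 1) hi', and_self, if_true]
    positivity

theorem traceT_pos_iff {U : Type*} [DecidableEq U] (r : ℕ → U) (n : ℕ) (a b : U) :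
    0 < traceT r n a b ↔ ∃ i < n, r i = a ∧ r (i + 1) = b := by
  simp [traceT, Finset.card_pos, Finset.Nonempty]

/-- In a chain of maximal likelihood, every transition of positive probability out of a state
that the trace leaves at some time `i < n` occurs in the trace. -/
theorem traceT_pos_of_visited {U : Type*} [DecidableEq U] (r : ℕ → U) (n : ℕ) (M : FinMC U)
    (hmax : ∀ M' : FinMC U, M'.lik r n ≤ M.lik r n) {i : ℕ} (hi : i < n) {b : U}
    (hP : 0 < M.P (r i) b) : 0 < traceT r n (r i) b := by
  by_contra hT
  have hunused : ∀ j < n, r j = r i → r (j + 1) ≠ b := fun j hj h1 h2 =>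
    hT ((traceT_pos_iff r n _ _).2 ⟨j, hj, h1, h2⟩)
  obtain ⟨M₀, hM₀⟩ := exists_lik_pos r n
  have hlik : 0 < M.lik r n := hM₀.trans_le (hmax M₀)
  have hμ : 0 < M.μ (r 0) :=
    lt_of_le_of_ne (M.μ_nonneg _) fun h => by simp [FinMC.lik, ← h] at hlik
  have hpos : ∀ j ∈ range n, 0 < M.P (r j) (r (j + 1)) := fun j hj =>
    lt_of_le_of_ne (M.P_nonneg _ _) fun h => by
      rw [FinMC.lik, Finset.prod_eq_zero hj h.symm] at hlik
      simp at hlik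
  have hS : ∀ x y, 0 < M.P x y → y ∈ M.S := fun x y h => by
    by_contra hy
    exact h.ne' (M.P_zero x y (Or.inr hy))
  have hbc : b ≠ r (i + 1) := (hunused i hi rfl).symm
  refine absurd (hmax (M.move (a := r i) (hS _ _ hP)
    (hS _ _ (hpos i (Finset.mem_range.2 hi))) hbc)) (not_le.2 ?_)
  refine mul_lt_mul_of_pos_left (Finset.prod_lt_prod hpos (fun j hj => ?_)
    ⟨i, Finset.mem_range.2 hi, ?_⟩) hμ
  · change _ ≤ moveMass M.P (r i) b (r (i + 1)) _ _
    unfold moveMass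
    by_cases h : r j = r i
    · rw [if_pos h, if_neg (hunused j (Finset.mem_range.1 hj) h)]
      split_ifs <;> linarith
    · rw [if_neg h]
  · change _ < moveMass M.P (r i) b (r (i + 1)) _ _
    unfold moveMass
    rw [if_pos rfl, if_pos rfl, if_neg hbc.symm]
    linarith

/-- Let `π = r 0 ⋯ r n` be a closed finite trace and let `M`
be a finite-state Markov chain with maximal likelihood of generating `π`.
Then every transition `(a, b)` of `M` with `a` reachable from `r 0` occurs as
a consecutive pair in `π`, i.e. `T_π(a, b) > 0`. -/
theorem maxLik_transitions_occur {U : Type*} [DecidableEq U] (r : ℕ → U) (n : ℕ)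
    (hclosed : ∃ i < n, r i = r n) (M : FinMC U)
    (hmax : ∀ M' : FinMC U, M'.lik r n ≤ M.lik r n) :
    ∀ a b, 0 < M.P a b → M.reach (r 0) a → 0 < traceT r n a b := by
  intro a b hP hreach
  obtain ⟨k, hk, hkn⟩ := hclosed
  have hvisited : ∃ i < n, r i = a := by
    clear hP
    induction hreach with
    | refl => exact ⟨0, by omega, rfl⟩
    | tail _ hstep ih =>
      obtain ⟨i, hi, rfl⟩ := ih
      obtain ⟨j, hj, -, rfl⟩ :=
        (traceT_pos_iff r n _ _).1 (traceT_pos_of_visited r n M hmax hi hstep)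
      rcases Nat.lt_or_ge (j + 1) n with h | h
      · exact ⟨j + 1, h, rfl⟩
      · -- The transition is the last one of the trace, so it leads to `r n = r k`.
        obtain rfl : n = j + 1 := by omega
        exact ⟨k, hk, hkn⟩
  obtain ⟨i, hi, rfl⟩ := hvisited
  exact traceT_pos_of_visited r n M hmax hi hP
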